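/- Let (f_j)_{j≥1} be real numbers in [0,1] and let (Δ_j)_{j≥1} be probability distributions on the nonnegative integers. Define the delayed composite observation x_t = Σ_{j=1}^t f_j·Δ_j({t − j}) for t ≥ 1. Then for all integers 1 ≤ a ≤ b, | Σ_{t=a}^{b} (x_t − f_t) | ≤ Σ_{j=1}^{a−1} Δ_j({x > a − 1 − j}) + Σ_{j=1}^{b} Δ_j({x > b − j}). -/

import Mathlib

open Finset

/-- The tail probability `p({x ≥ s})` of a distribution `p` on the nonnegative integers. -/
noncomputable def tailProb (p : ℕ → ℝ) (s : ℕ) : ℝ :=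
  ∑' x : ℕ, if s ≤ x then p x else 0

theorem tailProb_eq (p : ℕ → ℝ) (hp : HasSum p 1) (s : ℕ) :
    tailProb p s = 1 - ∑ i ∈ Finset.range s, p i := by
  have h1 : HasSum (fun i => if i ∈ Finset.range s then p i else 0)
      (∑ i ∈ Finset.range s, p i) := by
    have h := hasSum_sum_of_ne_finset_zero (L := .unconditional ℕ)
      (f := fun i => if i ∈ Finset.range s then p i else 0)
      (s := Finset.range s) (fun b hb => if_neg hb)
    rwa [Finset.sum_congr rfl (fun i hi => if_pos hi)] at h
  have h2 := hp.sub h1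
  unfold tailProb
  rw [← h2.tsum_eq]
  congr 1
  funext i
  by_cases h : s ≤ i
  · simp [h, Nat.not_lt.mpr h]
  · simp [h, Nat.lt_of_not_le h]

theorem tailProb_nonneg (p : ℕ → ℝ) (hp : ∀ i, 0 ≤ p i) (s : ℕ) : 0 ≤ tailProb p s := by
  unfold tailProb
  refine tsum_nonneg fun i => ?_
  split_ifs
  · exact hp i
  · exact le_rfl

theorem partial_window_eq
    (f : ℕ → ℝ) (Δ : ℕ → ℕ → ℝ) (hsum : ∀ j, HasSum (Δ j) 1)
    (x : ℕ → ℝ) (hx : ∀ t : ℕ, x t = ∑ j ∈ Finset.Icc 1 t, f j * Δ j (t - j)) (n : ℕ) :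
    ∑ t ∈ Finset.Icc 1 n, (x t - f t) =
      - ∑ j ∈ Finset.Icc 1 n, f j * tailProb (Δ j) (n - j + 1) := by
  induction n with
  | zero => simp
  | succ n ih =>
    rw [Finset.sum_Icc_succ_top (by omega), ih, hx, Finset.sum_Icc_succ_top (by omega),
      Finset.sum_Icc_succ_top (by omega)]
    have h : ∑ j ∈ Finset.Icc 1 n, f j * tailProb (Δ j) (n + 1 - j + 1) =
        ∑ j ∈ Finset.Icc 1 n, f j * tailProb (Δ j) (n - j + 1) -
        ∑ j ∈ Finset.Icc 1 n, f j * Δ j (n + 1 - j) := by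
      rw [← Finset.sum_sub_distrib]
      refine Finset.sum_congr rfl fun j hj => ?_
      have hj' := (Finset.mem_Icc.mp hj).2
      have e : n + 1 - j = n - j + 1 := by omega
      rw [e, tailProb_eq _ (hsum j), tailProb_eq _ (hsum j), Finset.sum_range_succ _ (n - j + 1)]
      ring
    rw [h, tailProb_eq _ (hsum (n + 1))]
    simp
    ring

/-- The deviation of the delayed composite observations from the rewards on a window `[a, b]`
is bounded by the mass of past rewards leaking into the window plus the mass of the window's
rewards escaping past `b`. -/
theorem delay_window_deviation_bound
    (f : ℕ → ℝ) (hf : ∀ j, f j ∈ Set.Icc (0 : ℝ) 1)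
    (Δ : ℕ → ℕ → ℝ) (hnn : ∀ j x, 0 ≤ Δ j x) (hsum : ∀ j, HasSum (Δ j) 1)
    (x : ℕ → ℝ) (hx : ∀ t : ℕ, x t = ∑ j ∈ Finset.Icc 1 t, f j * Δ j (t - j))
    (a b : ℕ) (ha : 1 ≤ a) (hab : a ≤ b) :
    |∑ t ∈ Finset.Icc a b, (x t - f t)| ≤
      (∑ j ∈ Finset.Icc 1 (a - 1), tailProb (Δ j) (a - 1 - j + 1)) +
        ∑ j ∈ Finset.Icc 1 b, tailProb (Δ j) (b - j + 1) := by
  have hS : ∑ t ∈ Finset.Icc a b, (x t - f t) =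
      ∑ t ∈ Finset.Icc 1 b, (x t - f t) - ∑ t ∈ Finset.Icc 1 (a - 1), (x t - f t) := by
    have hd : Finset.Icc 1 b = Finset.Icc 1 (a - 1) ∪ Finset.Icc a b := by
      ext t
      simp only [Finset.mem_union, Finset.mem_Icc]
      omega
    rw [hd, Finset.sum_union]
    · ring
    · rw [Finset.disjoint_left]
      intro t h1 h2
      simp only [Finset.mem_Icc] at h1 h2
      omega
  have hb : ∀ n, 0 ≤ ∑ j ∈ Finset.Icc 1 n, f j * tailProb (Δ j) (n - j + 1) := fun n =>
    Finset.sum_nonneg fun j _ => mul_nonneg (hf j).1 (tailProb_nonneg _ (hnn j) _)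
  have hc : ∀ n, ∑ j ∈ Finset.Icc 1 n, f j * tailProb (Δ j) (n - j + 1) ≤
      ∑ j ∈ Finset.Icc 1 n, tailProb (Δ j) (n - j + 1) := fun n =>
    Finset.sum_le_sum fun j _ =>
      mul_le_of_le_one_left (tailProb_nonneg _ (hnn j) _) (hf j).2
  rw [hS, partial_window_eq f Δ hsum x hx, partial_window_eq f Δ hsum x hx, abs_le]
  have h1 := hb b
  have h2 := hc b
  have h3 := hb (a - 1)
  have h4 := hc (a - 1)
  constructor <;> linarith
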